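/- Aut(SL_2(k)) ≅ PΓL_2(k), i.e., every automorphism of SL_2(k) is induced by a semilinear automorphism of k^2: it is the composition of conjugation by an element of GL_2(k) with the entrywise action of a field automorphism of k. -/

import Mathlib

namespace AutSL2

open Matrix

variable {k : Type} [Field k]

/-- Upper unipotent. -/
def u (x : k) : SpecialLinearGroup (Fin 2) k := ⟨!![1, x; 0, 1], by simp [det_fin_two]⟩

/-- Lower unipotent. -/
def l (x : k) : SpecialLinearGroup (Fin 2) k := ⟨!![1, 0; x, 1], by simp [det_fin_two]⟩

/-- Diagonal matrix. -/
def dg (x : k) (hx : x ≠ 0) : SpecialLinearGroup (Fin 2) k :=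
  ⟨!![x, 0; 0, x⁻¹], by simp [det_fin_two, hx]⟩

/-- Weyl element. -/
def w : SpecialLinearGroup (Fin 2) k := ⟨!![0, 1; -1, 0], by simp [det_fin_two]⟩

lemma sl_ext {A B : SpecialLinearGroup (Fin 2) k} (h00 : A.1 0 0 = B.1 0 0)
    (h01 : A.1 0 1 = B.1 0 1) (h10 : A.1 1 0 = B.1 1 0) (h11 : A.1 1 1 = B.1 1 1) : A = B := by
  apply Subtype.ext
  ext i j
  fin_cases i <;> fin_cases j <;> assumption

lemma mul00 (A B : SpecialLinearGroup (Fin 2) k) :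
    (A * B).1 0 0 = A.1 0 0 * B.1 0 0 + A.1 0 1 * B.1 1 0 := by
  change (A.1 * B.1) 0 0 = _
  simp [Matrix.mul_apply, Fin.sum_univ_two]
lemma mul01 (A B : SpecialLinearGroup (Fin 2) k) :
    (A * B).1 0 1 = A.1 0 0 * B.1 0 1 + A.1 0 1 * B.1 1 1 := by
  change (A.1 * B.1) 0 1 = _
  simp [Matrix.mul_apply, Fin.sum_univ_two]
lemma mul10 (A B : SpecialLinearGroup (Fin 2) k) :
    (A * B).1 1 0 = A.1 1 0 * B.1 0 0 + A.1 1 1 * B.1 1 0 := by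
  change (A.1 * B.1) 1 0 = _
  simp [Matrix.mul_apply, Fin.sum_univ_two]
lemma mul11 (A B : SpecialLinearGroup (Fin 2) k) :
    (A * B).1 1 1 = A.1 1 0 * B.1 0 1 + A.1 1 1 * B.1 1 1 := by
  change (A.1 * B.1) 1 1 = _
  simp [Matrix.mul_apply, Fin.sum_univ_two]

@[simp] lemma u00 (x : k) : (u x).1 0 0 = 1 := rfl
@[simp] lemma u01 (x : k) : (u x).1 0 1 = x := rfl
@[simp] lemma u10 (x : k) : (u x).1 1 0 = 0 := rfl
@[simp] lemma u11 (x : k) : (u x).1 1 1 = 1 := rfl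
@[simp] lemma l00 (x : k) : (l x).1 0 0 = 1 := rfl
@[simp] lemma l01 (x : k) : (l x).1 0 1 = 0 := rfl
@[simp] lemma l10 (x : k) : (l x).1 1 0 = x := rfl
@[simp] lemma l11 (x : k) : (l x).1 1 1 = 1 := rfl
@[simp] lemma w00 : (w (k := k)).1 0 0 = 0 := rfl
@[simp] lemma w01 : (w (k := k)).1 0 1 = 1 := rfl
@[simp] lemma w10 : (w (k := k)).1 1 0 = -1 := rfl
@[simp] lemma w11 : (w (k := k)).1 1 1 = 0 := rfl
@[simp] lemma dg00 (x : k) (hx : x ≠ 0) : (dg x hx).1 0 0 = x := rfl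
@[simp] lemma dg01 (x : k) (hx : x ≠ 0) : (dg x hx).1 0 1 = 0 := rfl
@[simp] lemma dg10 (x : k) (hx : x ≠ 0) : (dg x hx).1 1 0 = 0 := rfl
@[simp] lemma dg11 (x : k) (hx : x ≠ 0) : (dg x hx).1 1 1 = x⁻¹ := rfl
@[simp] lemma one00 : (1 : SpecialLinearGroup (Fin 2) k).1 0 0 = 1 := rfl
@[simp] lemma one01 : (1 : SpecialLinearGroup (Fin 2) k).1 0 1 = 0 := rfl
@[simp] lemma one10 : (1 : SpecialLinearGroup (Fin 2) k).1 1 0 = 0 := rfl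
@[simp] lemma one11 : (1 : SpecialLinearGroup (Fin 2) k).1 1 1 = 1 := rfl

lemma sl_det (A : SpecialLinearGroup (Fin 2) k) :
    A.1 0 0 * A.1 1 1 - A.1 0 1 * A.1 1 0 = 1 := by
  rw [← det_fin_two]; exact A.2

lemma u_mul (x y : k) : u x * u y = u (x + y) := by
  apply sl_ext <;> simp [mul00, mul01, mul10, mul11, add_comm]

lemma l_mul (x y : k) : l x * l y = l (x + y) := by
  apply sl_ext <;> simp [mul00, mul01, mul10, mul11, add_comm]

lemma u_zero : u (0 : k) = 1 := by apply sl_ext <;> simp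
lemma l_zero : l (0 : k) = 1 := by apply sl_ext <;> simp

lemma u_inj {x y : k} (h : u x = u y) : x = y := by
  have := congrArg (fun A => A.1 0 1) h
  simpa using this
lemma l_inj {x y : k} (h : l x = l y) : x = y := by
  have := congrArg (fun A => A.1 1 0) h
  simpa using this

lemma u_pow (x : k) (n : ℕ) : u x ^ n = u (n * x) := by
  induction n with
  | zero => simp [u_zero]
  | succ n ih => rw [pow_succ, ih, u_mul]; push_cast; congr 1; ring

/-- trace -/
def tr (A : SpecialLinearGroup (Fin 2) k) : k := A.1 0 0 + A.1 1 1

lemma tr_mul_comm (A B : SpecialLinearGroup (Fin 2) k) : tr (A * B) = tr (B * A) := by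
  simp only [tr, mul00, mul11]; ring

lemma tr_conj {A B D : SpecialLinearGroup (Fin 2) k} (h : D * A = B * D) : tr A = tr B := by
  have : A = D⁻¹ * (B * D) := by rw [← h]; group
  rw [this, tr_mul_comm]; group

lemma trace_char0 [CharZero k] (B D : SpecialLinearGroup (Fin 2) k) (h : D * B = B ^ 4 * D)
    (h15 : B ^ 15 ≠ 1) : tr B = 2 := by
  have ht := tr_conj h
  have hd := sl_det B
  have e2 : ∀ i j, (B.1 * B.1) i j = tr B * B.1 i j - (1 : Matrix (Fin 2) (Fin 2) k) i j := by
    intro i j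
    fin_cases i <;> fin_cases j <;>
      simp [Matrix.mul_apply, Fin.sum_univ_two, tr] <;>
      first | linear_combination -hd | ring
  have E2 : B.1 * B.1 = tr B • B.1 - 1 := by
    ext i j; rw [e2]; simp
  generalize htt : tr B = t at *
  have E3 : B.1 ^ 3 = (t ^ 2 - 1) • B.1 - t • (1 : Matrix (Fin 2) (Fin 2) k) := by
    rw [pow_succ, pow_two, E2, sub_mul, smul_mul_assoc, E2, one_mul]
    module
  have E4 : B.1 ^ 4 = (t ^ 3 - 2 * t) • B.1 - (t ^ 2 - 1) • (1 : Matrix (Fin 2) (Fin 2) k) := by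
    rw [pow_succ, E3, sub_mul, smul_mul_assoc, E2, smul_mul_assoc, one_mul]
    module
  have E5 : B.1 ^ 5 = (t ^ 4 - 3 * t ^ 2 + 1) • B.1
      - (t ^ 3 - 2 * t) • (1 : Matrix (Fin 2) (Fin 2) k) := by
    rw [pow_succ, E4, sub_mul, smul_mul_assoc, E2, smul_mul_assoc, one_mul]
    module
  have key : t = t ^ 4 - 4 * t ^ 2 + 2 := by
    have h4 : tr (B ^ 4) = (B.1 ^ 4) 0 0 + (B.1 ^ 4) 1 1 := rfl
    have h1 : B.1 0 0 + B.1 1 1 = t := htt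
    rw [E4] at h4
    simp at h4
    linear_combination ht + h4 + (t ^ 3 - 2 * t) * h1
  have : (t - 2) * ((t + 1) * (t ^ 2 + t - 1)) = 0 := by linear_combination -key
  rcases mul_eq_zero.1 this with h | h
  · linear_combination h
  exfalso
  rcases mul_eq_zero.1 h with h | h
  · have : B ^ 3 = 1 := by
      apply Subtype.ext
      change B.1 ^ 3 = 1
      have ht1 : t = -1 := by linear_combination h
      rw [E3, ht1]; simp
    apply h15
    rw [show 15 = 3 * 5 by rfl, pow_mul, this, one_pow]
  · have : B ^ 5 = 1 := by
      apply Subtype.ext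
      change B.1 ^ 5 = 1
      have h1 : t ^ 4 - 3 * t ^ 2 + 1 = 0 := by linear_combination (t ^ 2 - t - 1) * h
      have h2 : t ^ 3 - 2 * t = -1 := by linear_combination (t - 1) * h
      rw [E5, h1, h2]; simp
    apply h15
    rw [show 15 = 5 * 3 by rfl, pow_mul, this, one_pow]

lemma trace_charp (p : ℕ) [Fact p.Prime] [CharP k p] (B : SpecialLinearGroup (Fin 2) k)
    (h : B ^ p = 1) : tr B = 2 := by
  have h1 : B.1 ^ p = 1 := congrArg Subtype.val h
  have h2 : (B.1 - 1) ^ p = 0 := by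
    rw [sub_pow_char_of_commute (p := p) (h := Commute.one_right _), h1]; simp
  have h3 : IsNilpotent (B.1 - 1) := ⟨p, h2⟩
  have h4 := (Matrix.isNilpotent_trace_of_isNilpotent h3).eq_zero
  rw [Matrix.trace_fin_two] at h4
  simp at h4
  simp only [tr]
  linear_combination h4

lemma trace_u (φ : MulAut (SpecialLinearGroup (Fin 2) k)) (x : k) : tr (φ (u x)) = 2 := by
  obtain ⟨p, hp⟩ := CharP.exists k
  rcases CharP.char_is_prime_or_zero k p with hpp | rfl
  · have : Fact p.Prime := ⟨hpp⟩
    apply trace_charp p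
    rw [← map_pow, u_pow, CharP.cast_eq_zero, zero_mul, u_zero, map_one]
  · have : CharZero k := CharP.charP_to_charZero k
    by_cases hx : x = 0
    · rw [hx, u_zero, map_one]; simp [tr]; norm_num
    apply trace_char0 _ (φ (dg 2 two_ne_zero))
    · rw [← map_pow, ← map_mul, ← map_mul, u_pow]
      congr 1
      apply sl_ext <;> simp [mul00, mul01, mul10, mul11]
      ring
    · rw [← map_pow, u_pow]
      intro h
      have := φ.injective (h.trans (map_one φ).symm)
      rw [← u_zero] at this
      have := u_inj this
      simp [hx] at this

lemma trace_l (φ : MulAut (SpecialLinearGroup (Fin 2) k)) (x : k) : tr (φ (l x)) = 2 := by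
  rw [← trace_u φ (-x)]
  apply tr_conj (D := φ w)
  rw [← map_mul, ← map_mul]
  congr 1
  apply sl_ext <;> simp [mul00, mul01, mul10, mul11]

/-- a unipotent commuting with a nontrivial upper unipotent is upper unipotent -/
lemma eq_u {A : SpecialLinearGroup (Fin 2) k} (ht : tr A = 2) (h : A * u 1 = u 1 * A) :
    A = u (A.1 0 1) := by
  have h00 := congrArg (fun A => A.1 0 0) h
  have h01 := congrArg (fun A => A.1 0 1) h
  simp [mul00, mul01] at h00 h01
  simp only [tr] at ht
  have hd := sl_det A
  rw [h00] at hd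
  have : (A.1 0 0 - 1) ^ 2 = 0 := by linear_combination A.1 0 0 * ht - hd
  have := pow_eq_zero_iff (two_ne_zero) |>.1 this
  apply sl_ext <;> simp
  · linear_combination this
  · exact h00
  · linear_combination ht - this

lemma eq_l {A : SpecialLinearGroup (Fin 2) k} (ht : tr A = 2) {c : k} (hc : c ≠ 0)
    (h : A * l c = l c * A) : A = l (A.1 1 0) := by
  have h00 := congrArg (fun A => A.1 0 0) h
  simp [mul00, hc] at h00
  simp only [tr] at ht
  have hd := sl_det A
  rw [h00] at hd
  have : (A.1 0 0 - 1) ^ 2 = 0 := by linear_combination A.1 0 0 * ht - hd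
  have := pow_eq_zero_iff (two_ne_zero) |>.1 this
  apply sl_ext <;> simp
  · linear_combination this
  · exact h00
  · linear_combination ht - this

/-- conjugation by GL -/
def conjGL (g : GL (Fin 2) k) : MulAut (SpecialLinearGroup (Fin 2) k) where
  toFun A := ⟨g.1 * A.1 * (g⁻¹).1, by
    rw [det_mul, det_mul, A.2, mul_one, ← det_mul, Units.mul_inv, det_one]⟩
  invFun A := ⟨(g⁻¹).1 * A.1 * g.1, by
    rw [det_mul, det_mul, A.2, mul_one, ← det_mul, Units.inv_mul, det_one]⟩
  left_inv A := by
    apply Subtype.ext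
    simp [mul_assoc]
  right_inv A := by
    apply Subtype.ext
    simp [mul_assoc]
  map_mul' A B := by
    apply Subtype.ext
    change g.1 * (A.1 * B.1) * (g⁻¹).1 = (g.1 * A.1 * (g⁻¹).1) * (g.1 * B.1 * (g⁻¹).1)
    simp [mul_assoc]

lemma conjGL_val (g : GL (Fin 2) k) (A : SpecialLinearGroup (Fin 2) k) :
    (conjGL g A).1 = g.1 * A.1 * (g⁻¹).1 := rfl

lemma conjGL_eq {g : GL (Fin 2) k} {A B : SpecialLinearGroup (Fin 2) k}
    (h : g.1 * A.1 = B.1 * g.1) : conjGL g A = B := by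
  apply Subtype.ext
  rw [conjGL_val, h, mul_assoc, Units.mul_inv, mul_one]

/-- the automorphism is standard -/
def Std (φ : MulAut (SpecialLinearGroup (Fin 2) k)) : Prop :=
  ∃ (g : GL (Fin 2) k) (σ : k ≃+* k), ∀ A : SpecialLinearGroup (Fin 2) k,
    (φ A).1 = g.1 * (A.1.map ⇑σ) * (g⁻¹).1

lemma Std.of_conj {φ : MulAut (SpecialLinearGroup (Fin 2) k)} (h : GL (Fin 2) k)
    (H : Std (conjGL h * φ)) : Std φ := by
  obtain ⟨g, σ, H⟩ := H
  refine ⟨h⁻¹ * g, σ, fun A => ?_⟩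
  have := H A
  rw [MulAut.mul_apply, conjGL_val] at this
  have h2 : (φ A).1 = (h⁻¹).1 * (h.1 * (φ A).1 * (h⁻¹).1) * h.1 := by
    simp [mul_assoc]
  rw [h2, this]
  simp only [_root_.mul_inv_rev, inv_inv, Units.val_mul, mul_assoc]

lemma exists_conj {A : SpecialLinearGroup (Fin 2) k} (ht : tr A = 2) (hA : A ≠ 1) :
    ∃ g : GL (Fin 2) k, conjGL g A = u 1 := by
  have hd := sl_det A
  simp only [tr] at ht
  suffices ∃ g : GL (Fin 2) k, A.1 * g.1 = g.1 * (u 1).1 by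
    obtain ⟨g, hg⟩ := this
    refine ⟨g⁻¹, conjGL_eq ?_⟩
    calc (g⁻¹).1 * A.1 = (g⁻¹).1 * (A.1 * g.1) * (g⁻¹).1 := by simp [mul_assoc]
      _ = _ := by rw [hg]; simp [← mul_assoc]
  by_cases hc : A.1 1 0 = 0
  · rw [hc] at hd
    have : (A.1 0 0 - 1) ^ 2 = 0 := by linear_combination A.1 0 0 * ht - hd
    have h0 := pow_eq_zero_iff (two_ne_zero) |>.1 this
    have h00 : A.1 0 0 = 1 := by linear_combination h0
    have h11 : A.1 1 1 = 1 := by linear_combination ht - h0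
    have h01 : A.1 0 1 ≠ 0 := by
      intro h01
      apply hA
      apply sl_ext <;> simp [*]
    refine ⟨GeneralLinearGroup.mkOfDetNeZero !![A.1 0 1, 0; 0, 1] (by simpa [det_fin_two] using h01), ?_⟩
    change A.1 * !![A.1 0 1, 0; 0, 1] = !![A.1 0 1, 0; 0, 1] * !![1, 1; 0, 1]
    ext i j
    fin_cases i <;> fin_cases j <;> simp [Matrix.mul_apply, Fin.sum_univ_two, *]
  · refine ⟨GeneralLinearGroup.mkOfDetNeZero !![A.1 0 0 - 1, 1; A.1 1 0, 0] (by simpa [det_fin_two] using hc), ?_⟩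
    change A.1 * !![A.1 0 0 - 1, 1; A.1 1 0, 0] = !![A.1 0 0 - 1, 1; A.1 1 0, 0] * !![1, 1; 0, 1]
    ext i j
    fin_cases i <;> fin_cases j <;> simp [Matrix.mul_apply, Fin.sum_univ_two]
    · linear_combination A.1 0 0 * ht - hd
    · linear_combination A.1 1 0 * ht

lemma exists_conj2 {A : SpecialLinearGroup (Fin 2) k} (ht : tr A = 2) (hA : A.1 1 0 ≠ 0) :
    ∃ g : GL (Fin 2) k, conjGL g (u 1) = u 1 ∧ ∃ c, conjGL g A = l c := by
  have hd := sl_det A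
  simp only [tr] at ht
  refine ⟨GeneralLinearGroup.mkOfDetNeZero !![1, (1 - A.1 0 0) / A.1 1 0; 0, 1]
    (by simp [det_fin_two]), conjGL_eq ?_, A.1 1 0, conjGL_eq ?_⟩
  · change !![1, (1 - A.1 0 0) / A.1 1 0; 0, 1] * !![1, 1; 0, 1] =
      !![1, 1; 0, 1] * !![1, (1 - A.1 0 0) / A.1 1 0; 0, 1]
    ext i j
    fin_cases i <;> fin_cases j <;> simp [Matrix.mul_apply, Fin.sum_univ_two, add_comm]
  · change !![1, (1 - A.1 0 0) / A.1 1 0; 0, 1] * A.1 =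
      !![1, 0; A.1 1 0, 1] * !![1, (1 - A.1 0 0) / A.1 1 0; 0, 1]
    ext i j
    fin_cases i <;> fin_cases j <;> simp [Matrix.mul_apply, Fin.sum_univ_two]
    · field_simp; ring
    · field_simp
      linear_combination ht - hd
    · field_simp
      linear_combination ht

/-- `u` and `l` generate -/
lemma hom_ext {f g : SpecialLinearGroup (Fin 2) k →* SpecialLinearGroup (Fin 2) k}
    (hu : ∀ x, f (u x) = g (u x)) (hl : ∀ x, f (l x) = g (l x)) (A) : f A = g A := by
  have main : ∀ A : SpecialLinearGroup (Fin 2) k, A.1 1 0 ≠ 0 → f A = g A := by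
    intro A hc
    have hd := sl_det A
    have : A = u ((A.1 0 0 - 1) / A.1 1 0) * l (A.1 1 0) * u ((A.1 1 1 - 1) / A.1 1 0) := by
      apply sl_ext <;> simp [mul00, mul01, mul10, mul11, hc]
      · field_simp
        linear_combination -hd
      · field_simp; ring
    rw [this]
    simp only [map_mul, hu, hl]
  by_cases hc : A.1 1 0 = 0
  · have : A = l (-1) * (l 1 * A) := by
      rw [← mul_assoc, l_mul]; simp [l_zero]
    rw [this, map_mul, map_mul g, hl, main (l 1 * A)]
    have hd := sl_det A
    rw [mul10, hc]
    intro h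
    simp at h
    rw [h, hc] at hd
    simp at hd
  · exact main A hc

lemma std_of_normalized (φ : MulAut (SpecialLinearGroup (Fin 2) k)) (h1 : φ (u 1) = u 1)
    {c : k} (h2 : φ (l 1) = l c) : Std φ := by
  have hc : c ≠ 0 := by
    rintro rfl
    rw [l_zero] at h2
    have := φ.injective (h2.trans (map_one φ).symm)
    rw [← l_zero] at this
    exact one_ne_zero (l_inj this)
  have ha : ∀ x, ∃ y, φ (u x) = u y := fun x => ⟨_, eq_u (trace_u φ x) (by
    rw [← h1, ← map_mul, ← map_mul, u_mul, u_mul, add_comm])⟩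
  have hb : ∀ x, ∃ y, φ (l x) = l y := fun x => ⟨_, eq_l (trace_l φ x) hc (by
    rw [← h2, ← map_mul, ← map_mul, l_mul, l_mul, add_comm])⟩
  choose a ha using ha
  choose b hb using hb
  have h1' : φ⁻¹ (u 1) = u 1 := by
    nth_rw 1 [← h1]; exact φ.symm_apply_apply _
  have surj : Function.Surjective a := by
    intro y
    have : ∃ z, φ⁻¹ (u y) = u z := ⟨_, eq_u (trace_u φ⁻¹ y) (by
      nth_rw 1 [← h1']; nth_rw 2 [← h1']
      rw [← map_mul, ← map_mul, u_mul, u_mul, add_comm])⟩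
    obtain ⟨z, hz⟩ := this
    refine ⟨z, u_inj ?_⟩
    rw [← ha, ← hz]; exact φ.apply_symm_apply _
  have a1 : a 1 = 1 := u_inj (by rw [← ha, h1])
  have aadd : ∀ x y, a (x + y) = a x + a y := fun x y => u_inj (by
    rw [← ha, ← u_mul, ← u_mul, map_mul, ha, ha])
  have inj : Function.Injective a := by
    intro x y h
    apply u_inj
    apply φ.injective
    rw [ha, ha, h]
  have a0 : a 0 = 0 := by have := aadd 0 0; simpa using this
  have ane : ∀ x, x ≠ 0 → a x ≠ 0 := fun x hx h => hx (inj (h.trans a0.symm))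
  -- the Weyl group relation
  have rel : ∀ x y : k, x ≠ 0 →
      u x * l (-x⁻¹) * u x * u y = l (-y / x ^ 2) * (u x * l (-x⁻¹) * u x) := by
    intro x y hx
    apply sl_ext <;> simp [mul00, mul01, mul10, mul11, hx]
    field_simp
  have rel2 : ∀ x y : k, x ≠ 0 → b (-y / x ^ 2) = - a y / a x ^ 2 ∧ 1 + a x * b (-x⁻¹) = 0 := by
    have step : ∀ x y : k, x ≠ 0 →
        (1 + a x * b (-x⁻¹)) * a y = 0 ∧
        b (-x⁻¹) * a y = b (-y / x ^ 2) * ((1 + a x * b (-x⁻¹)) * a x + a x) + 0 := by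
      intro x y hx
      have h := congrArg φ (rel x y hx)
      simp only [map_mul, ha, hb] at h
      have h01 := congrArg (fun A => A.1 0 1) h
      have h10 := congrArg (fun A => A.1 1 0) h
      have h11 := congrArg (fun A => A.1 1 1) h
      simp [mul00, mul01, mul10, mul11] at h01 h10 h11
      have e : (1 + a x * b (-x⁻¹)) * a y = 0 := by
        rcases h01 with h01 | h01
        · rw [h01]; simp
        · rw [h01]; simp
      refine ⟨e, ?_⟩
      linear_combination h11
    intro x y hx
    have e : 1 + a x * b (-x⁻¹) = 0 := by
      have := (step x 1 hx).1
      rwa [a1, mul_one] at this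
    refine ⟨?_, e⟩
    have := (step x y hx).2
    rw [e] at this
    have hax := ane x hx
    rw [eq_div_iff (pow_ne_zero 2 hax)]
    linear_combination (-a x) * this + a y * e
  have hba : ∀ y, b y = a y := by
    intro y
    have := (rel2 1 (-y) one_ne_zero).1
    have hneg : a (-y) = - a y := by
      have := aadd (-y) y
      rw [neg_add_cancel, a0] at this
      linear_combination -this
    simpa [a1, hneg] using this
  have aneg : ∀ y, a (-y) = - a y := by
    intro y
    have := aadd (-y) y
    rw [neg_add_cancel, a0] at this
    linear_combination -this
  have ainv : ∀ x, a x⁻¹ = (a x)⁻¹ := by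
    intro x
    by_cases hx : x = 0
    · simp [hx, a0]
    have := (rel2 x 1 hx).2
    rw [hba, aneg] at this
    apply eq_inv_of_mul_eq_one_left
    linear_combination -this
  have quad : ∀ x y, a (y * x ^ 2) = a y * a x ^ 2 := by
    intro x y
    by_cases hx : x = 0
    · simp [hx, a0]
    have := (rel2 x⁻¹ (-y) (inv_ne_zero hx)).1
    rw [hba, ainv, aneg] at this
    simpa using this
  have sq : ∀ x, a (x ^ 2) = a x ^ 2 := by
    intro x
    have := quad x 1
    simpa [a1] using this
  have amul : ∀ x y, a (x * y) = a x * a y := by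
    intro x y
    by_cases h2 : (2 : k) = 0
    · have e : a (x * y) ^ 2 = (a x * a y) ^ 2 := by
        rw [← sq, mul_pow, quad, sq, mul_pow]
      have : (a (x * y) - a x * a y) ^ 2 = 0 := by
        linear_combination e + (a x * a y) * (a x * a y - a (x * y)) * h2
      have := pow_eq_zero_iff (two_ne_zero) |>.1 this
      linear_combination this
    · have e := quad (y + 1) x
      rw [show x * (y + 1) ^ 2 = x * y ^ 2 + (x * y + x * y) + x by ring, aadd, aadd, aadd, aadd,
        quad, a1] at e
      apply mul_left_cancel₀ h2
      linear_combination e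
  let σ : k ≃+* k := 
    { Equiv.ofBijective a ⟨inj, surj⟩ with
      map_mul' := amul
      map_add' := aadd }
  have hσ : ∀ x, σ x = a x := fun x => rfl
  refine ⟨1, σ, fun A => ?_⟩
  have := hom_ext (f := φ.toMonoidHom) (g := SpecialLinearGroup.map (σ : k →+* k))
    (fun x => by
      change φ (u x) = _
      rw [ha]
      apply sl_ext <;> simp [hσ, a1, a0])
    (fun x => by
      change φ (l x) = _
      rw [hb, hba]
      apply sl_ext <;> simp [hσ, a1, a0]) A
  change φ A = _ at this
  rw [this]
  simp

lemma std_all (φ : MulAut (SpecialLinearGroup (Fin 2) k)) : Std φ := by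
  have hne : φ (u 1) ≠ 1 := by
    intro h
    have := φ.injective (h.trans (map_one φ).symm)
    rw [← u_zero] at this
    exact one_ne_zero (u_inj this)
  obtain ⟨g, hg⟩ := exists_conj (trace_u φ 1) hne
  apply Std.of_conj g
  have h1 : (conjGL g * φ) (u 1) = u 1 := hg
  generalize conjGL g * φ = ψ at h1
  have hA : (ψ (l 1)).1 1 0 ≠ 0 := by
    intro hc
    have ht := trace_l ψ 1
    have hd := sl_det (ψ (l 1))
    simp only [tr] at ht
    rw [hc] at hd
    have h0 : ((ψ (l 1)).1 0 0 - 1) ^ 2 = 0 := by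
      linear_combination (ψ (l 1)).1 0 0 * ht - hd
    have h0 := pow_eq_zero_iff (two_ne_zero) |>.1 h0
    have : ψ (l 1 * u 1) = ψ (u 1 * l 1) := by
      rw [map_mul, map_mul, h1]
      apply sl_ext <;> simp [mul00, mul01, mul10, mul11, hc]
      linear_combination 2 * h0 - ht
    have := congrArg (fun A => A.1 0 0) (ψ.injective this)
    simp [mul00] at this
  obtain ⟨g, hg, c, hc⟩ := exists_conj2 (trace_l ψ 1) hA
  apply Std.of_conj g
  apply std_of_normalized (c := c)
  · rw [MulAut.mul_apply, h1, hg]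
  · rw [MulAut.mul_apply, hc]

end AutSL2

/-- `Aut(SL₂(k)) ≅ PΓL₂(k)` for `|k| > 3`: every automorphism of `SL₂(k)`
is the composition of conjugation by an element of `GL₂(k)` with the entrywise action of
a field automorphism of `k`, and such a pair `(g, σ)` induces the identity automorphism
precisely when `σ = id` and `g` is scalar (i.e. the map `PΓL₂(k) → Aut(SL₂(k))` is
bijective). -/
theorem stmt18 (k : Type) [Field k] (hk : 3 < Nat.card k ∨ Infinite k) :
    (∀ φ : MulAut (Matrix.SpecialLinearGroup (Fin 2) k),
      ∃ (g : GL (Fin 2) k) (σ : k ≃+* k),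
        ∀ A : Matrix.SpecialLinearGroup (Fin 2) k,
          (φ A : Matrix (Fin 2) (Fin 2) k) =
            (g : Matrix (Fin 2) (Fin 2) k) * ((A : Matrix (Fin 2) (Fin 2) k).map ⇑σ) *
              ((g⁻¹ : GL (Fin 2) k) : Matrix (Fin 2) (Fin 2) k)) ∧
    (∀ (g : GL (Fin 2) k) (σ : k ≃+* k),
      (∀ A : Matrix.SpecialLinearGroup (Fin 2) k,
        (g : Matrix (Fin 2) (Fin 2) k) * ((A : Matrix (Fin 2) (Fin 2) k).map ⇑σ) *
            ((g⁻¹ : GL (Fin 2) k) : Matrix (Fin 2) (Fin 2) k) =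
          (A : Matrix (Fin 2) (Fin 2) k)) →
      σ = RingEquiv.refl k ∧
        ∃ c : kˣ, (g : Matrix (Fin 2) (Fin 2) k) = (c : k) • (1 : Matrix (Fin 2) (Fin 2) k)) := by
  refine ⟨fun φ => AutSL2.std_all φ, fun g σ H => ?_⟩
  have H' : ∀ A : Matrix.SpecialLinearGroup (Fin 2) k, g.1 * (A.1.map ⇑σ) = A.1 * g.1 := by
    intro A
    have h : g.1 * (A.1.map ⇑σ) * (g⁻¹).1 = A.1 := H A
    calc g.1 * (A.1.map ⇑σ) = g.1 * (A.1.map ⇑σ) * (g⁻¹).1 * g.1 := by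
          rw [mul_assoc _ _ g.1, Units.inv_mul, mul_one]
      _ = _ := by rw [h]
  have U := fun x i j => congrFun (congrFun (H' (AutSL2.u x)) i) j
  have L := fun x i j => congrFun (congrFun (H' (AutSL2.l x)) i) j
  simp only [Matrix.mul_apply, Fin.sum_univ_two, Matrix.map_apply] at U L
  have c0 : g.1 1 0 = 0 := by simpa using U 1 0 0
  have b0 : g.1 0 1 = 0 := by simpa using L 1 0 0
  have hx : ∀ x, g.1 0 0 * σ x = x * g.1 1 1 := by
    intro x; simpa [b0] using U x 0 1
  have had : g.1 0 0 = g.1 1 1 := by simpa using hx 1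
  have hne : g.1 0 0 ≠ 0 := by
    intro h
    have hdet : g.1.det ≠ 0 := (Matrix.isUnits_det_units g).ne_zero
    rw [Matrix.det_fin_two, h, b0] at hdet
    simp at hdet
  refine ⟨?_, Units.mk0 _ hne, ?_⟩
  · ext x
    have := hx x
    rw [← had, mul_comm] at this
    exact mul_right_cancel₀ hne this
  · ext i j
    fin_cases i <;> fin_cases j <;> simp [c0, b0, had]
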